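/- Fix α ∈ [0, 1/√2] and r ∈ [0,1]. Define, for x ∈ [0,1], f(α,x) = (α² − 1/4)·x, g(α,x) = (1/4)·√(x² + 8α²(2α² − 1)(x² − 1)), and h(α,x,r) = |f(α,x) + r·g(α,x)| + |f(α,x) − r·g(α,x)|. Then the function x ↦ h(α,x,r) is monotone nondecreasing on the interval [0,1]. (Note that the expression under the square root is nonnegative for x ∈ [0,1] and α ∈ [0,1/√2].) -/

import Mathlib

/-!
Since `|u + v| + |u - v| = 2 max(|u|, |v|)`, the function `h` equals `2 max(|f|, |r| g)`, a maximum
of two nondecreasing functions of `x ≥ 0`: `|f| = |α² - 1/4| x`, and the radicand of `g` is a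
quadratic polynomial in `x` with no linear term, whose leading coefficient is the square
`1 + 8α²(2α² - 1) = (4α² - 1)²`.
-/

/-- `f(α,x) = (α² − 1/4)·x`. -/
noncomputable def fFun (α x : ℝ) : ℝ := (α ^ 2 - 1 / 4) * x

/-- `g(α,x) = (1/4)·√(x² + 8α²(2α² − 1)(x² − 1))`. -/
noncomputable def gFun (α x : ℝ) : ℝ :=
  (1 / 4) * Real.sqrt (x ^ 2 + 8 * α ^ 2 * (2 * α ^ 2 - 1) * (x ^ 2 - 1))

/-- `h(α,x,r) = |f + r·g| + |f − r·g|`. -/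
noncomputable def hFun (α x r : ℝ) : ℝ :=
  |fFun α x + r * gFun α x| + |fFun α x - r * gFun α x|

section AbsAddAddAbsSub

variable {G : Type*} [AddCommGroup G] [LinearOrder G] [IsOrderedAddMonoid G]

lemma abs_add_add_abs_sub (u v : G) : |u + v| + |u - v| = 2 • max |u| |v| := by
  grind

lemma monotoneOn_abs_add_add_abs_sub {β : Type*} [Preorder β] {s : Set β} {f g : β → G}
    (hf : MonotoneOn (fun x => |f x|) s) (hg : MonotoneOn (fun x => |g x|) s) :
    MonotoneOn (fun x => |f x + g x| + |f x - g x|) s := by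
  simp only [abs_add_add_abs_sub, two_nsmul]
  exact (hf.max hg).add (hf.max hg)

end AbsAddAddAbsSub

lemma abs_fFun_monotoneOn (α : ℝ) : MonotoneOn (fun x => |fFun α x|) (Set.Ici 0) := by
  intro x (hx : 0 ≤ x) y (hy : 0 ≤ y) hxy
  simp only [fFun, abs_mul, abs_of_nonneg hx, abs_of_nonneg hy]
  gcongr

lemma gFun_nonneg (α x : ℝ) : 0 ≤ gFun α x := by
  unfold gFun
  positivity

lemma gFun_eq (α x : ℝ) :
    gFun α x = 1 / 4 * √((4 * α ^ 2 - 1) ^ 2 * x ^ 2 + 8 * α ^ 2 * (1 - 2 * α ^ 2)) := by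
  unfold gFun
  ring_nf

lemma gFun_monotoneOn (α : ℝ) : MonotoneOn (gFun α) (Set.Ici 0) := by
  intro x (hx : 0 ≤ x) y _ hxy
  rw [gFun_eq, gFun_eq]
  gcongr

theorem hFun_monotoneOn_general (α r : ℝ) (hα : |α| ≤ 1 / √2) :
    MonotoneOn (fun x => hFun α x r) (Set.Ici 0) := by
  have abs_r_mul_g : MonotoneOn (fun x => |r * gFun α x|) (Set.Ici 0) := by
    simp only [abs_mul, abs_of_nonneg (gFun_nonneg α _)]
    exact (monotone_mul_left_of_nonneg (abs_nonneg r)).comp_monotoneOn (gFun_monotoneOn α)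
  exact monotoneOn_abs_add_add_abs_sub (abs_fFun_monotoneOn α) abs_r_mul_g

theorem hFun_monotoneOn
    (α r : ℝ) (hα0 : 0 ≤ α) (hα : α ≤ 1 / Real.sqrt 2)
    (hr0 : 0 ≤ r) (hr1 : r ≤ 1) :
    MonotoneOn (fun x => hFun α x r) (Set.Icc (0 : ℝ) 1) :=
  (hFun_monotoneOn_general α r ((abs_of_nonneg hα0).trans_le hα)).mono Set.Icc_subset_Ici_self
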